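/- arXiv:1703.03639 — 4 statements merged into one kernel-verified Lean document; each statement's English description precedes it below -/
import Mathlib

section
/- Suppose d, n ∈ ℕ are such that 3 ≤ d ≤ n/4 and S ⊆ V satisfies |S| ≤ n/6. Let H be a graph with vertex set S and let F be a bipartite graph with vertex partition (S, V∖S) such that Δ(F ∪ H) ≤ d. Let u ∈ S and v ∈ V∖S be such that uv ∉ E(F). Then the conditional probability, with respect to the uniform distribution on 𝒢_{n,d}, that uv ∈ E(G_{n,d}) given that G_{n,d}[S] = H and F ⊆ G_{n,d} is at most 6(d − d_H(u) − d_F(u))/n. Equivalently, |{G ∈ 𝒢_{n,d} : G[S] = H, F ⊆ G, uv ∈ E(G)}| ≤ (6(d − d_H(u) − d_F(u))/n) · |{G ∈ 𝒢_{n,d} : G[S] = H, F ⊆ G}|. -/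
open scoped Classical BigOperators

noncomputable section


def swC {n : ℕ} (u v x y : Fin n) : SimpleGraph (Fin n) :=
  SimpleGraph.fromEdgeSet {s(u,v), s(x,y), s(u,x), s(v,y)}

def sw {n : ℕ} (u v x y : Fin n) (G : SimpleGraph (Fin n)) : SimpleGraph (Fin n) :=
  symmDiff G (swC u v x y)

lemma sw_adj {n : ℕ} (u v x y : Fin n) (G : SimpleGraph (Fin n)) (a b : Fin n) :
    (sw u v x y G).Adj a b ↔
      ((G.Adj a b ∧ ¬ (swC u v x y).Adj a b) ∨ ((swC u v x y).Adj a b ∧ ¬ G.Adj a b)) := by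
  simp [sw, symmDiff]

lemma swC_adj {n : ℕ} (u v x y : Fin n) (a b : Fin n) :
    (swC u v x y).Adj a b ↔ (((a = u ∧ b = v) ∨ (a = v ∧ b = u)) ∨ ((a = x ∧ b = y) ∨ (a = y ∧ b = x))
      ∨ ((a = u ∧ b = x) ∨ (a = x ∧ b = u)) ∨ ((a = v ∧ b = y) ∨ (a = y ∧ b = v))) ∧ a ≠ b := by
  simp [swC]

lemma card_swap {n : ℕ} (A B : Finset (Fin n)) (a b : Fin n) (ha : a ∈ A) (hb : b ∉ A)
    (h : B = insert b (A.erase a)) : B.card = A.card := by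
  subst h
  rw [Finset.card_insert_of_notMem (by simp [hb]), Finset.card_erase_of_mem ha]
  have := Finset.card_pos.mpr ⟨a, ha⟩
  omega

lemma sw_degree {n : ℕ} (u v x y : Fin n) (G : SimpleGraph (Fin n))
    (h1 : G.Adj u v) (h2 : G.Adj x y) (h3 : ¬ G.Adj u x) (h4 : ¬ G.Adj v y)
    (h5 : u ≠ x) (h6 : v ≠ y) (w : Fin n) : (sw u v x y G).degree w = G.degree w := by
  have huv := h1.ne
  have hxy := h2.ne
  have hvx : v ≠ x := by rintro rfl; exact h3 h1
  have huy : u ≠ y := by rintro rfl; exact h3 h2.symm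
  have h1' := h1.symm
  have h2' := h2.symm
  have h3' : ¬ G.Adj x u := fun h => h3 h.symm
  have h4' : ¬ G.Adj y v := fun h => h4 h.symm
  simp only [← SimpleGraph.card_neighborFinset_eq_degree]
  by_cases c1 : w = u
  · subst c1
    apply card_swap _ _ v x (by simpa using h1) (by simpa using h3)
    ext b
    simp only [SimpleGraph.mem_neighborFinset, Finset.mem_insert, Finset.mem_erase, sw_adj, swC_adj]
    grind
  by_cases c2 : w = v
  · subst c2
    apply card_swap _ _ u y (by simpa using h1') (by simpa using h4)
    ext b
    simp only [SimpleGraph.mem_neighborFinset, Finset.mem_insert, Finset.mem_erase, sw_adj, swC_adj]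
    grind
  by_cases c3 : w = x
  · subst c3
    apply card_swap _ _ y u (by simpa using h2) (by simpa using h3')
    ext b
    simp only [SimpleGraph.mem_neighborFinset, Finset.mem_insert, Finset.mem_erase, sw_adj, swC_adj]
    grind
  by_cases c4 : w = y
  · subst c4
    apply card_swap _ _ x v (by simpa using h2') (by simpa using h4')
    ext b
    simp only [SimpleGraph.mem_neighborFinset, Finset.mem_insert, Finset.mem_erase, sw_adj, swC_adj]
    grind
  congr 1
  ext b
  simp only [SimpleGraph.mem_neighborFinset, sw_adj, swC_adj]
  grind

lemma card_pairs {n d : ℕ} (G : SimpleGraph (Fin n)) (hG : ∀ w, G.degree w = d)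
    (A : Finset (Fin n)) :
    (Finset.univ.filter (fun p : Fin n × Fin n => p.1 ∈ A ∧ G.Adj p.1 p.2)).card = A.card * d := by
  rw [Finset.card_eq_sum_card_fiberwise (f := Prod.fst) (t := A)]
  · rw [Finset.sum_const_nat]
    intro a ha
    rw [← hG a, ← SimpleGraph.card_neighborFinset_eq_degree]
    apply Finset.card_bij' (fun p _ => p.2) (fun b _ => (a, b))
    case hi => simp only [Finset.mem_filter, SimpleGraph.mem_neighborFinset]; grind
    case hj => simp only [Finset.mem_filter, SimpleGraph.mem_neighborFinset]; grind
    all_goals simp +contextual [Prod.ext_iff]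
  · intro p hp
    simp at hp ⊢
    exact hp.1

lemma card_pairs' {n d : ℕ} (G : SimpleGraph (Fin n)) (hG : ∀ w, G.degree w = d)
    (A : Finset (Fin n)) :
    (Finset.univ.filter (fun p : Fin n × Fin n => p.2 ∈ A ∧ G.Adj p.1 p.2)).card = A.card * d := by
  rw [← card_pairs G hG A]
  apply Finset.card_bij' (fun p _ => p.swap) (fun p _ => p.swap)
  all_goals simp +contextual [G.adj_comm]

def goodP {n : ℕ} (S : Finset (Fin n)) (F : SimpleGraph (Fin n)) (u v : Fin n)
    (G : SimpleGraph (Fin n)) : Finset (Fin n × Fin n) :=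
  Finset.univ.filter (fun p => p.1 ∉ S ∧ G.Adj p.1 p.2 ∧ ¬ G.Adj u p.1 ∧ ¬ G.Adj v p.2 ∧ v ≠ p.2
    ∧ ¬ F.Adj p.1 p.2)

lemma good_card {n d : ℕ} (hdn : 4 * d ≤ n) (S : Finset (Fin n)) (hS : 6 * S.card ≤ n)
    (F : SimpleGraph (Fin n))
    (hF : ∀ a b : Fin n, F.Adj a b → (a ∈ S ∧ b ∉ S) ∨ (a ∉ S ∧ b ∈ S))
    (u v : Fin n) (G : SimpleGraph (Fin n)) (hG : ∀ w, G.degree w = d) (huv : G.Adj u v) :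
    n * d ≤ 6 * (goodP S F u v G).card := by
  have hT := card_pairs G hG Sᶜ
  have h1 := card_pairs G hG (G.neighborFinset u)
  have h2 := card_pairs' G hG (insert v ((G.neighborFinset v).erase u))
  have h3 := card_pairs' G hG S
  rw [card_swap (G.neighborFinset v) _ u v (by simpa using huv.symm) (by simp) rfl] at h2
  rw [SimpleGraph.card_neighborFinset_eq_degree, hG] at h1 h2
  rw [Finset.card_compl, Fintype.card_fin] at hT
  have hsub : (Finset.univ.filter (fun p : Fin n × Fin n => p.1 ∈ Sᶜ ∧ G.Adj p.1 p.2)) ⊆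
      goodP S F u v G ∪ ((Finset.univ.filter
        (fun p : Fin n × Fin n => p.1 ∈ G.neighborFinset u ∧ G.Adj p.1 p.2)) ∪
      ((Finset.univ.filter (fun p : Fin n × Fin n =>
        p.2 ∈ insert v ((G.neighborFinset v).erase u) ∧ G.Adj p.1 p.2)) ∪
      (Finset.univ.filter (fun p : Fin n × Fin n => p.2 ∈ S ∧ G.Adj p.1 p.2)))) := by
    rintro ⟨x, y⟩ hp
    have hFx := hF x y
    have hs := G.adj_comm u x
    simp only [goodP, Finset.mem_union, Finset.mem_filter, Finset.mem_univ, true_and,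
      Finset.mem_compl, SimpleGraph.mem_neighborFinset, Finset.mem_insert,
      Finset.mem_erase] at hp ⊢
    grind
  have hc := Finset.card_le_card hsub
  have c1 := Finset.card_union_le (goodP S F u v G) ((Finset.univ.filter
        (fun p : Fin n × Fin n => p.1 ∈ G.neighborFinset u ∧ G.Adj p.1 p.2)) ∪
      ((Finset.univ.filter (fun p : Fin n × Fin n =>
        p.2 ∈ insert v ((G.neighborFinset v).erase u) ∧ G.Adj p.1 p.2)) ∪
      (Finset.univ.filter (fun p : Fin n × Fin n => p.2 ∈ S ∧ G.Adj p.1 p.2))))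
  have c2 := Finset.card_union_le ((Finset.univ.filter
        (fun p : Fin n × Fin n => p.1 ∈ G.neighborFinset u ∧ G.Adj p.1 p.2)))
      ((Finset.univ.filter (fun p : Fin n × Fin n =>
        p.2 ∈ insert v ((G.neighborFinset v).erase u) ∧ G.Adj p.1 p.2)) ∪
      (Finset.univ.filter (fun p : Fin n × Fin n => p.2 ∈ S ∧ G.Adj p.1 p.2)))
  have c3 := Finset.card_union_le
      ((Finset.univ.filter (fun p : Fin n × Fin n =>
        p.2 ∈ insert v ((G.neighborFinset v).erase u) ∧ G.Adj p.1 p.2)))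
      (Finset.univ.filter (fun p : Fin n × Fin n => p.2 ∈ S ∧ G.Adj p.1 p.2))
  have key : (n - S.card) * d ≤ (goodP S F u v G).card + (d * d + (d * d + S.card * d)) := by
    omega
  have hsn : S.card ≤ n := by omega
  zify [hsn] at key hS hdn ⊢
  nlinarith [mul_le_mul_of_nonneg_right hS (Int.natCast_nonneg d),
    mul_le_mul_of_nonneg_right hdn (Int.natCast_nonneg d)]

def backR {n : ℕ} (S : Finset (Fin n)) (F : SimpleGraph (Fin n)) (u : Fin n)
    (G : SimpleGraph (Fin n)) : Finset (Fin n) :=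
  Finset.univ.filter (fun x => G.Adj u x ∧ x ∉ S ∧ ¬ F.Adj u x)

lemma back_card {n d : ℕ} (S : Finset (Fin n)) (H F : SimpleGraph (Fin n))
    (hH : ∀ a b : Fin n, H.Adj a b → a ∈ S ∧ b ∈ S)
    (hF : ∀ a b : Fin n, F.Adj a b → (a ∈ S ∧ b ∉ S) ∨ (a ∉ S ∧ b ∈ S))
    (u : Fin n) (hu : u ∈ S) (G : SimpleGraph (Fin n)) (hG : ∀ w, G.degree w = d)
    (hGH : ∀ a b : Fin n, a ∈ S → b ∈ S → (G.Adj a b ↔ H.Adj a b)) (hFG : F ≤ G) :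
    (backR S F u G).card + H.degree u + F.degree u = d := by
  rw [← hG u]
  simp only [← SimpleGraph.card_neighborFinset_eq_degree]
  rw [← Finset.card_union_of_disjoint, ← Finset.card_union_of_disjoint]
  · congr 1
    ext b
    have := hH u b
    have := hF u b
    have := hGH u b
    have := @hFG u b
    simp only [backR, Finset.mem_union, Finset.mem_filter, Finset.mem_univ, true_and,
      SimpleGraph.mem_neighborFinset]
    grind
  all_goals
    rw [Finset.disjoint_left]
    intro b
    have := hH u b
    have := hF u b
    have := hGH u b
    have := @hFG u b
    simp only [backR, Finset.mem_union, Finset.mem_filter, Finset.mem_univ, true_and,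
      SimpleGraph.mem_neighborFinset]
    grind

/-- **Lemma 3.1.** Switching bound on the conditional probability of an edge. Stated in
counting form: among simple `d`-regular graphs `G` on `n` vertices with `G[S] = H` and
`F ⊆ G`, the proportion containing the edge `uv` is at most `6(d - d_H(u) - d_F(u))/n`. -/
theorem statement_5 (n d : ℕ) (hd : 3 ≤ d) (hdn : 4 * d ≤ n)
    (S : Finset (Fin n)) (hS : 6 * S.card ≤ n)
    (H : SimpleGraph (Fin n)) (hH : ∀ a b : Fin n, H.Adj a b → a ∈ S ∧ b ∈ S)
    (F : SimpleGraph (Fin n))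
    (hF : ∀ a b : Fin n, F.Adj a b → (a ∈ S ∧ b ∉ S) ∨ (a ∉ S ∧ b ∈ S))
    (hΔ : ∀ w : Fin n, (F ⊔ H).degree w ≤ d)
    (u v : Fin n) (hu : u ∈ S) (hv : v ∉ S) (huv : ¬ F.Adj u v) :
    ((Finset.univ.filter (fun G : SimpleGraph (Fin n) =>
        (∀ w, G.degree w = d) ∧
        (∀ a b : Fin n, a ∈ S → b ∈ S → (G.Adj a b ↔ H.Adj a b)) ∧
        F ≤ G ∧ G.Adj u v)).card : ℝ)
      ≤ 6 * ((d : ℝ) - (H.degree u : ℝ) - (F.degree u : ℝ)) / (n : ℝ) *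
        ((Finset.univ.filter (fun G : SimpleGraph (Fin n) =>
          (∀ w, G.degree w = d) ∧
          (∀ a b : Fin n, a ∈ S → b ∈ S → (G.Adj a b ↔ H.Adj a b)) ∧
          F ≤ G)).card : ℝ) := by
  set A := (Finset.univ.filter (fun G : SimpleGraph (Fin n) =>
        (∀ w, G.degree w = d) ∧
        (∀ a b : Fin n, a ∈ S → b ∈ S → (G.Adj a b ↔ H.Adj a b)) ∧
        F ≤ G ∧ G.Adj u v)) with hA
  set B := (Finset.univ.filter (fun G : SimpleGraph (Fin n) =>
          (∀ w, G.degree w = d) ∧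
          (∀ a b : Fin n, a ∈ S → b ∈ S → (G.Adj a b ↔ H.Adj a b)) ∧
          F ≤ G)) with hB
  have hmain : (A.sigma (fun G => goodP S F u v G)).card ≤
      (B.sigma (fun G => backR S F u G ×ˢ G.neighborFinset v)).card := by
    apply Finset.card_le_card_of_injOn (fun q => ⟨sw u v q.2.1 q.2.2 q.1, q.2⟩)
    · rintro ⟨G, x, y⟩ hq
      simp only [hA, hB, goodP, backR, Finset.mem_coe, Finset.mem_sigma, Finset.mem_filter,
        Finset.mem_univ, true_and, Finset.mem_product, SimpleGraph.mem_neighborFinset] at hq ⊢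
      obtain ⟨⟨g1, g2, g3, g4⟩, p1, p2, p3, p4, p5, p6⟩ := hq
      have hux : u ≠ x := by rintro rfl; exact p1 hu
      refine ⟨⟨fun w => ?_, fun a b ha hb => ?_, fun a b hab => ?_⟩, ⟨?_, p1, ?_⟩, ?_⟩
      · rw [sw_degree u v x y G g4 p2 p3 p4 hux p5, g1]
      · rw [← g2 a b ha hb, sw_adj, swC_adj]
        grind
      · have h1 := g3 hab
        have h2 := hab.symm
        have h3 := h1.symm
        rw [sw_adj, swC_adj]
        grind
      · rw [sw_adj, swC_adj]
        grind
      · intro h; exact p3 (g3 h)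
      · rw [sw_adj, swC_adj]
        grind
    · rintro ⟨G, x, y⟩ _ ⟨G', x', y'⟩ _ h
      simp only [Sigma.mk.injEq, heq_eq_eq, Prod.mk.injEq] at h
      obtain ⟨h, rfl, rfl⟩ := h
      have : G = G' := symmDiff_left_injective _ h
      rw [this]
  rw [Finset.card_sigma, Finset.card_sigma] at hmain
  have hl : A.card * (n * d) ≤ 6 * ∑ G ∈ A, (goodP S F u v G).card := by
    rw [Finset.mul_sum, ← smul_eq_mul]
    apply Finset.card_nsmul_le_sum
    intro G hG
    simp only [hA, Finset.mem_filter] at hG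
    exact good_card hdn S hS F hF u v G hG.2.1 hG.2.2.2.2
  have hr : ((∑ G ∈ B, (backR S F u G ×ˢ G.neighborFinset v).card : ℕ) : ℝ) =
      B.card * (((d : ℝ) - (H.degree u : ℝ) - (F.degree u : ℝ)) * d) := by
    rw [Nat.cast_sum, ← nsmul_eq_mul]
    apply Finset.sum_eq_card_nsmul
    intro G hG
    simp only [hB, Finset.mem_filter] at hG
    obtain ⟨-, g1, g2, g3⟩ := hG
    have h1 := back_card S H F hH hF u hu G g1 g2 g3
    rw [Finset.card_product, SimpleGraph.card_neighborFinset_eq_degree, g1]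
    push_cast
    congr 1
    have : (((backR S F u G).card + H.degree u + F.degree u : ℕ) : ℝ) = d := by rw [h1]
    push_cast at this
    linarith
  have hl' : (A.card : ℝ) * (n * d) ≤ 6 * ((∑ G ∈ A, (goodP S F u v G).card : ℕ) : ℝ) := by
    exact_mod_cast hl
  have hm' : ((∑ G ∈ A, (goodP S F u v G).card : ℕ) : ℝ) ≤
      ((∑ G ∈ B, (backR S F u G ×ˢ G.neighborFinset v).card : ℕ) : ℝ) := by
    exact_mod_cast hmain
  rw [hr] at hm'
  have hd0 : (0 : ℝ) < d := by
    have : 0 < d := by omega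
    exact_mod_cast this
  have hn0 : (0 : ℝ) < n := by
    have : 0 < n := by omega
    exact_mod_cast this
  rw [div_mul_eq_mul_div, le_div_iff₀ hn0]
  apply le_of_mul_le_mul_right _ hd0
  linarith
end
end

section
/- Suppose d, n ∈ ℕ are such that 3 ≤ d ≤ n/4 and S ⊆ V satisfies |S| ≤ n/6. Let G be a simple d-regular graph on V, let u ∈ S and v ∈ V∖S with uv ∈ E(G). Then the number of ordered pairs (x, y) of distinct vertices with x, y ∈ V∖S, {x,y} ≠ {u,v}, xy ∈ E(G), vx ∉ E(G) and uy ∉ E(G) is at least dn − 2d|S| − 2d², and this quantity is at least dn/6. -/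
open scoped Classical BigOperators

noncomputable section

theorem aux_fst {n d : ℕ} (G : SimpleGraph (Fin n)) (hreg : ∀ w, G.degree w = d)
    (A : Finset (Fin n)) :
    (Finset.univ.filter (fun q : Fin n × Fin n => q.1 ∈ A ∧ G.Adj q.1 q.2)).card = A.card * d := by
  have h : (Finset.univ.filter (fun q : Fin n × Fin n => q.1 ∈ A ∧ G.Adj q.1 q.2))
      = (A.sigma (fun x => G.neighborFinset x)).map
        (Equiv.sigmaEquivProd (Fin n) (Fin n)).toEmbedding := by
    ext ⟨x, y⟩
    simp [Finset.mem_map_equiv]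
  rw [h, Finset.card_map, Finset.card_sigma]
  simp [hreg]

theorem aux_snd {n d : ℕ} (G : SimpleGraph (Fin n)) (hreg : ∀ w, G.degree w = d)
    (A : Finset (Fin n)) :
    (Finset.univ.filter (fun q : Fin n × Fin n => q.2 ∈ A ∧ G.Adj q.1 q.2)).card = A.card * d := by
  rw [← aux_fst G hreg A]
  refine Finset.card_bij (fun q _ => q.swap) ?_ ?_ ?_
  · rintro ⟨x, y⟩ h
    simpa [G.adj_comm] using h
  · rintro ⟨x, y⟩ _ ⟨z, w⟩ _ h
    simpa [and_comm] using h
  · rintro ⟨x, y⟩ h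
    exact ⟨(y, x), by simpa [G.adj_comm] using h, rfl⟩

/-- **Counting step of Lemma 3.1.** For a simple `d`-regular graph `G` on `n` vertices
with `3 ≤ d ≤ n/4`, `|S| ≤ n/6`, `u ∈ S`, `v ∉ S` and `uv ∈ E(G)`, the number of ordered
pairs `(x,y)` of distinct vertices outside `S` with `{x,y} ≠ {u,v}`, `xy ∈ E(G)`,
`vx ∉ E(G)` and `uy ∉ E(G)` is at least `dn - 2d|S| - 2d²`, which is at least `dn/6`. -/
theorem statement_8 (n d : ℕ) (hd : 3 ≤ d) (hdn : 4 * d ≤ n)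
    (S : Finset (Fin n)) (hS : 6 * S.card ≤ n)
    (G : SimpleGraph (Fin n)) (hreg : ∀ w, G.degree w = d)
    (u v : Fin n) (hu : u ∈ S) (hv : v ∉ S) (huv : G.Adj u v) :
    ((d : ℝ) * n - 2 * d * S.card - 2 * (d : ℝ) ^ 2
      ≤ ((Finset.univ.filter (fun q : Fin n × Fin n =>
          q.1 ≠ q.2 ∧ q.1 ∉ S ∧ q.2 ∉ S ∧ s(q.1, q.2) ≠ s(u, v) ∧
          G.Adj q.1 q.2 ∧ ¬ G.Adj v q.1 ∧ ¬ G.Adj u q.2)).card : ℝ)) ∧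
    (d : ℝ) * n / 6 ≤ (d : ℝ) * n - 2 * d * S.card - 2 * (d : ℝ) ^ 2 := by
  constructor
  · have hN : ∀ w, (S ∪ G.neighborFinset w).card ≤ S.card + d := fun w => by
      refine (Finset.card_union_le _ _).trans ?_
      rw [G.card_neighborFinset_eq_degree, hreg]
    have h0 := aux_fst G hreg Finset.univ
    have h1 := aux_fst G hreg (S ∪ G.neighborFinset v)
    have h2 := aux_snd G hreg (S ∪ G.neighborFinset u)
    have m1 := Nat.mul_le_mul_right d (hN v)
    have m2 := Nat.mul_le_mul_right d (hN u)
    rw [← h1] at m1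
    rw [← h2] at m2
    rw [Finset.card_univ, Fintype.card_fin] at h0
    set T := Finset.univ.filter (fun q : Fin n × Fin n =>
          q.1 ≠ q.2 ∧ q.1 ∉ S ∧ q.2 ∉ S ∧ s(q.1, q.2) ≠ s(u, v) ∧
          G.Adj q.1 q.2 ∧ ¬ G.Adj v q.1 ∧ ¬ G.Adj u q.2) with hT
    set B1 := Finset.univ.filter
      (fun q : Fin n × Fin n => q.1 ∈ S ∪ G.neighborFinset v ∧ G.Adj q.1 q.2) with hB1
    set B2 := Finset.univ.filter
      (fun q : Fin n × Fin n => q.2 ∈ S ∪ G.neighborFinset u ∧ G.Adj q.1 q.2) with hB2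
    have hsub : Finset.univ.filter
        (fun q : Fin n × Fin n => q.1 ∈ Finset.univ ∧ G.Adj q.1 q.2) ⊆ T ∪ (B1 ∪ B2) := by
      rintro ⟨x, y⟩ h
      have hxy : G.Adj x y := by simpa using h
      have hne := hxy.ne
      simp only [hT, hB1, hB2, Finset.mem_union, Finset.mem_filter, Finset.mem_univ, true_and,
        SimpleGraph.mem_neighborFinset]
      by_cases a1 : x ∈ S
      · tauto
      by_cases a2 : y ∈ S
      · tauto
      have : s(x, y) ≠ s(u, v) := by
        intro e
        rcases Sym2.eq_iff.1 e with ⟨rfl, _⟩ | ⟨_, rfl⟩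
        · exact a1 hu
        · exact a2 hu
      tauto
    have hc := Finset.card_le_card hsub
    have c1 := Finset.card_union_le T (B1 ∪ B2)
    have c2 := Finset.card_union_le B1 B2
    have key : n * d ≤ T.card + ((S.card + d) * d + (S.card + d) * d) := by omega
    have key' : (n : ℝ) * d ≤ T.card + ((S.card + d) * d + (S.card + d) * d) := by
      exact_mod_cast key
    linarith
  · have a : (4 : ℝ) * d ≤ n := by exact_mod_cast hdn
    have b : (6 : ℝ) * S.card ≤ n := by exact_mod_cast hS
    have c : (0 : ℝ) ≤ d := by positivity
    have e1 := mul_le_mul_of_nonneg_left a c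
    have e2 := mul_le_mul_of_nonneg_left b c
    linarith
end
end

section
/- Suppose d, n ∈ ℕ are such that 3 ≤ d ≤ n/4 and S ⊆ V satisfies |S| ≤ n/6. Let F be a bipartite graph with vertex partition (S, V∖S), let v ∈ V∖S, let k ≥ 0 be an integer, and let G be a simple d-regular graph on V with F ⊆ G and d_{G,S}(v) − d_F(v) = k+1. Then the number of triples (u, x, y), where u ∈ S with uv ∈ E(G)∖E(F), and (x, y) is an ordered pair of distinct vertices in V∖S with x, y ≠ v, xy ∈ E(G), vx ∉ E(G) and uy ∉ E(G), is at least (k+1)·dn/6. -/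
open scoped Classical BigOperators

noncomputable section

lemma aux_row {n d : ℕ} (G : SimpleGraph (Fin n)) (hreg : ∀ w, G.degree w = d)
    (A : Finset (Fin n)) :
    (Finset.univ.filter (fun p : Fin n × Fin n => G.Adj p.1 p.2 ∧ p.1 ∈ A)).card = A.card * d := by
  have h : ∀ p ∈ Finset.univ.filter (fun p : Fin n × Fin n => G.Adj p.1 p.2 ∧ p.1 ∈ A),
      p.1 ∈ A := by
    intro p hp
    simp at hp
    exact hp.2
  rw [Finset.card_eq_sum_card_fiberwise (f := Prod.fst) (t := A) h]
  rw [Finset.sum_const_nat]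
  intro x hx
  rw [← hreg x, ← SimpleGraph.card_neighborFinset_eq_degree]
  symm
  refine Finset.card_bij (fun y _ => (x, y)) ?_ ?_ ?_
  · intro y hy
    simp at hy
    simp [hy, hx]
  · intro a _ b _ hab
    simpa using hab
  · rintro ⟨a, b⟩ hab
    simp at hab
    obtain ⟨⟨h1, h2⟩, rfl⟩ := hab
    exact ⟨b, by simpa using h1, rfl⟩

lemma aux_col {n d : ℕ} (G : SimpleGraph (Fin n)) (hreg : ∀ w, G.degree w = d)
    (A : Finset (Fin n)) :
    (Finset.univ.filter (fun p : Fin n × Fin n => G.Adj p.1 p.2 ∧ p.2 ∈ A)).card = A.card * d := by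
  rw [← aux_row G hreg A]
  refine Finset.card_bij (fun p _ => p.swap) ?_ ?_ ?_
  · rintro ⟨a, b⟩ h
    simp at h
    simp [h.1.symm, h.2]
  · intro a _ b _ hab
    exact Prod.swap_injective hab
  · rintro ⟨a, b⟩ h
    simp at h
    exact ⟨(b, a), by simp [h.1.symm, h.2], rfl⟩

lemma aux_good {n d : ℕ} (G : SimpleGraph (Fin n)) (hreg : ∀ w, G.degree w = d)
    (A B : Finset (Fin n)) :
    n * d ≤ (Finset.univ.filter
      (fun p : Fin n × Fin n => G.Adj p.1 p.2 ∧ p.1 ∉ A ∧ p.2 ∉ B)).card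
      + A.card * d + B.card * d := by
  have h0 := aux_row G hreg Finset.univ
  rw [Finset.card_univ, Fintype.card_fin] at h0
  rw [← h0, ← aux_row G hreg A, ← aux_col G hreg B]
  refine le_trans (Finset.card_le_card ?_)
    (le_trans (Finset.card_union_le _ _) (Nat.add_le_add_right (Finset.card_union_le _ _) _))
  intro p hp
  simp at hp
  simp only [Finset.mem_union, Finset.mem_filter, Finset.mem_univ, true_and]
  tauto

/-- **Counting step of Lemma 3.2.** Let `G` be a simple `d`-regular graph on `n` vertices
with `3 ≤ d ≤ n/4`, `|S| ≤ n/6`, let `F` be a bipartite graph with parts `(S, V∖S)`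
with `F ⊆ G`, let `v ∉ S` and suppose `d_{G,S}(v) - d_F(v) = k + 1`. Then the number of
triples `(u, x, y)` with `u ∈ S`, `uv ∈ E(G)∖E(F)`, `x, y ∉ S` distinct, `x, y ≠ v`,
`xy ∈ E(G)`, `vx ∉ E(G)` and `uy ∉ E(G)` is at least `(k+1) d n / 6`. -/
theorem statement_9 (n d : ℕ) (hd : 3 ≤ d) (hdn : 4 * d ≤ n)
    (S : Finset (Fin n)) (hS : 6 * S.card ≤ n)
    (F : SimpleGraph (Fin n))
    (hF : ∀ a b : Fin n, F.Adj a b → (a ∈ S ∧ b ∉ S) ∨ (a ∉ S ∧ b ∈ S))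
    (v : Fin n) (hv : v ∉ S) (k : ℕ)
    (G : SimpleGraph (Fin n)) (hreg : ∀ w, G.degree w = d) (hFG : F ≤ G)
    (hk : (G.neighborFinset v ∩ S).card = F.degree v + (k + 1)) :
    ((k : ℝ) + 1) * d * n / 6
      ≤ ((Finset.univ.filter (fun q : Fin n × Fin n × Fin n =>
          q.1 ∈ S ∧ G.Adj q.1 v ∧ ¬ F.Adj q.1 v ∧
          q.2.1 ≠ q.2.2 ∧ q.2.1 ∉ S ∧ q.2.2 ∉ S ∧ q.2.1 ≠ v ∧ q.2.2 ≠ v ∧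
          G.Adj q.2.1 q.2.2 ∧ ¬ G.Adj v q.2.1 ∧ ¬ G.Adj q.1 q.2.2)).card : ℝ) := by
  have hd0 : 0 < d := by omega
  set T := Finset.univ.filter (fun q : Fin n × Fin n × Fin n =>
          q.1 ∈ S ∧ G.Adj q.1 v ∧ ¬ F.Adj q.1 v ∧
          q.2.1 ≠ q.2.2 ∧ q.2.1 ∉ S ∧ q.2.2 ∉ S ∧ q.2.1 ≠ v ∧ q.2.2 ≠ v ∧
          G.Adj q.2.1 q.2.2 ∧ ¬ G.Adj v q.2.1 ∧ ¬ G.Adj q.1 q.2.2) with hT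
  set U := (G.neighborFinset v ∩ S) \ F.neighborFinset v with hU
  have hUc : k + 1 ≤ U.card := by
    have h : (G.neighborFinset v ∩ S).card - F.degree v ≤ U.card := by
      rw [hU, ← SimpleGraph.card_neighborFinset_eq_degree]
      convert Finset.le_card_sdiff (F.neighborFinset v) (G.neighborFinset v ∩ S) using 2
    have hk2 : (G.neighborFinset v ∩ S).card = F.degree v + (k + 1) := by
      convert hk using 2
    omega
  have hmaps : ∀ q ∈ T, q.1 ∈ U := by
    intro q hq
    simp only [hT, Finset.mem_filter] at hq
    obtain ⟨-, h1, h2, h3, -⟩ := hq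
    simp only [hU, Finset.mem_sdiff, Finset.mem_inter, SimpleGraph.mem_neighborFinset]
    exact ⟨⟨h2.symm, h1⟩, fun h => h3 h.symm⟩
  have hfib : ∀ u ∈ U, n * d ≤ 6 * (T.filter (fun q => q.1 = u)).card := by
    intro u hu
    simp only [hU, Finset.mem_sdiff, Finset.mem_inter, SimpleGraph.mem_neighborFinset] at hu
    obtain ⟨⟨hvu, huS⟩, hFu⟩ := hu
    have hg := aux_good G hreg (insert v (S ∪ (G.neighborFinset v).erase u))
      (S ∪ G.neighborFinset u)
    have hA : (insert v (S ∪ (G.neighborFinset v).erase u)).card ≤ S.card + d := by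
      have h1 := Finset.card_insert_le v (S ∪ (G.neighborFinset v).erase u)
      have h2 := Finset.card_union_le S ((G.neighborFinset v).erase u)
      have h3 := Finset.card_erase_of_mem (s := G.neighborFinset v) (a := u) (by simpa using hvu)
      rw [SimpleGraph.card_neighborFinset_eq_degree, hreg] at h3
      omega
    have hB : (S ∪ G.neighborFinset u).card ≤ S.card + d := by
      have h2 := Finset.card_union_le S (G.neighborFinset u)
      rw [SimpleGraph.card_neighborFinset_eq_degree, hreg] at h2
      exact h2
    have hle : (Finset.univ.filter
      (fun p : Fin n × Fin n => G.Adj p.1 p.2 ∧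
        p.1 ∉ insert v (S ∪ (G.neighborFinset v).erase u) ∧ p.2 ∉ S ∪ G.neighborFinset u)).card
        ≤ (T.filter (fun q => q.1 = u)).card := by
      refine Finset.card_le_card_of_injOn (fun p => (u, p)) ?_ ?_
      · rintro ⟨x, y⟩ hp
        simp only [Finset.coe_filter, Set.mem_ofPred_eq, Finset.mem_univ, true_and,
          Finset.mem_insert, Finset.mem_union, Finset.mem_erase,
          SimpleGraph.mem_neighborFinset, not_or, not_and] at hp
        obtain ⟨hxy, ⟨hxv, hxS, hx⟩, hyS, hy⟩ := hp
        simp only [hT, Finset.coe_filter, Set.mem_ofPred_eq, Finset.mem_filter, Finset.mem_univ,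
          true_and, and_true]
        refine ⟨huS, hvu.symm, fun h => hFu h.symm, hxy.ne, hxS, hyS, hxv, ?_, hxy, ?_, hy⟩
        · rintro rfl
          exact hy hvu.symm
        · exact hx (fun h => hxS (h ▸ huS))
      · intro a _ b _ hab
        simpa using hab
    have hA' := Nat.mul_le_mul_right d hA
    have hB' := Nat.mul_le_mul_right d hB
    have h5 : 12 * (S.card + d) ≤ 5 * n := by omega
    have h5' := Nat.mul_le_mul_right d h5
    nlinarith
  have hsum : U.card * (n * d) ≤ 6 * T.card := by
    rw [Finset.card_eq_sum_card_fiberwise (f := Prod.fst) (t := U) hmaps, Finset.mul_sum,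
      ← smul_eq_mul]
    exact Finset.card_nsmul_le_sum _ _ _ hfib
  have hfin : (k + 1) * (n * d) ≤ 6 * T.card := le_trans (Nat.mul_le_mul_right _ hUc) hsum
  have hr : ((k : ℝ) + 1) * (n * d) ≤ 6 * (T.card : ℝ) := by exact_mod_cast hfin
  linarith
end
end

section
/- Suppose μ ≥ 0 and d, n ∈ ℕ with 3 ≤ d ≤ n−1 and n sufficiently large. Consider the exploration process on a uniformly random input (G_{n,d}, 𝔖_{n,d}) with percolation probability p = (1 − μ n^{−1/3})/(d−1). For each t, let A_t ⊆ S_t be the set of vertices that were added to the explored set at a time when every edge incident to the explored set had already been exposed (i.e. the vertices that start a new component of the percolated graph), let a_t = |A_t| and c_t = |S_t ∖ A_t|. Then for every 0 ≤ t ≤ 5 d n^{2/3}, on the event that c_s ≤ 8 n^{2/3} for all s ≤ t, we have a_t ≤ ⌈t/(5d/6)⌉. -/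
open scoped Classical BigOperators

noncomputable section

/-- The set of all simple `d`-regular graphs on the vertex set `Fin n`. -/
def regularGraphs (n d : ℕ) : Finset (SimpleGraph (Fin n)) :=
  Finset.univ.filter (fun G => ∀ v, G.degree v = d)

/-- The probability of the percolation configuration `ω`, where each potential edge is
retained independently with probability `p`. -/
def percWeight {n : ℕ} (p : ℝ) (ω : Sym2 (Fin n) → Bool) : ℝ :=
  p ^ (Finset.univ.filter (fun e : Sym2 (Fin n) => ω e = true)).card *
    (1 - p) ^ (Finset.univ.filter (fun e : Sym2 (Fin n) => ω e = false)).card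

/-- The state of the exploration process: the explored set `S_t`, the set `F_t` of exposed
edges that failed to percolate, the set `A_t` of vertices that started a new component,
and the values `Y_t` and `Z_t`. -/
abbrev ExpState (n : ℕ) :=
  Finset (Fin n) × Finset (Sym2 (Fin n)) × Finset (Fin n) × ℕ × ℕ

/-- `d_F(u)`: the number of edges of the edge set `F` containing `u`. -/
def degF {n : ℕ} (F : Finset (Sym2 (Fin n))) (u : Fin n) : ℕ :=
  (F.filter (fun e => u ∈ e)).card

/-- `d_{G,S}(u)`: the number of neighbours of `u` in `G` that belong to `S`. -/
def degS {n : ℕ} (G : SimpleGraph (Fin n)) (S : Finset (Fin n)) (u : Fin n) : ℕ :=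
  (G.neighborFinset u ∩ S).card

/-- A single step of the exploration process on the input `(G, σ)` with semi-edge
labelling `L` and percolation configuration `ω`. -/
def expStep {n d : ℕ} (G : SimpleGraph (Fin n)) (L : Fin n → Fin n → Fin d)
    (σ : Fin n → Equiv.Perm (Fin d)) (ω : Sym2 (Fin n) → Bool)
    (st : ExpState n) : ExpState n :=
  let S := st.1
  let F := st.2.1
  let A := st.2.2.1
  let U := S.filter (fun u => degS G S u + degF F u < d)
  if hU : U.Nonempty then
    -- `v_{t+1}` is the first unfinished vertex of `S_t` in the linear order
    let v := U.min' hU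
    -- candidates for `w_{t+1}` : vertices `w ∉ S_t` with `vw ∈ E(G) ∖ E(F_t)`
    let W := (Finset.univ \ S).filter (fun w => G.Adj v w ∧ s(v, w) ∉ F)
    -- `w_{t+1}` minimises `σ_v (ℓ(w))`
    let W' := W.filter (fun w => ∀ w' ∈ W, σ v (L v w) ≤ σ v (L v w'))
    if hW : W'.Nonempty then
      let w := W'.min' hW
      if ω s(v, w) then
        (insert w S, F.filter (fun e => w ∉ e), A, degF F w, degS G S w - degF F w - 1)
      else
        (S, insert s(v, w) F, A, 0, 0)
    else (S, F, A, 0, 0)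
  else
    -- start a new component at a vertex `w ∉ S_t` minimising `d_{F_t}`
    let C := Finset.univ \ S
    let C' := C.filter (fun w => ∀ w' ∈ C, degF F w ≤ degF F w')
    if hC : C'.Nonempty then
      let w := C'.min' hC
      (insert w S, F.filter (fun e => w ∉ e), insert w A, degF F w, 0)
    else (S, F, A, 0, 0)

/-- The trajectory of the exploration process; `expTraj G L σ ω t` is the state after
`t` steps. -/
def expTraj {n d : ℕ} (G : SimpleGraph (Fin n)) (L : Fin n → Fin n → Fin d)
    (σ : Fin n → Equiv.Perm (Fin d)) (ω : Sym2 (Fin n) → Bool) : ℕ → ExpState n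
  | 0 => (∅, ∅, ∅, 0, 0)
  | t + 1 => expStep G L σ ω (expTraj G L σ ω t)

/-- `S_t`, the set of explored vertices at time `t`. -/
def expS {n d : ℕ} (G : SimpleGraph (Fin n)) (L : Fin n → Fin n → Fin d)
    (σ : Fin n → Equiv.Perm (Fin d)) (ω : Sym2 (Fin n) → Bool) (t : ℕ) : Finset (Fin n) :=
  (expTraj G L σ ω t).1

/-- `F_t`, the set of exposed edges that failed to percolate at time `t`. -/
def expF {n d : ℕ} (G : SimpleGraph (Fin n)) (L : Fin n → Fin n → Fin d)
    (σ : Fin n → Equiv.Perm (Fin d)) (ω : Sym2 (Fin n) → Bool) (t : ℕ) :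
    Finset (Sym2 (Fin n)) :=
  (expTraj G L σ ω t).2.1

/-- `A_t`, the set of explored vertices that started a new component. -/
def expA {n d : ℕ} (G : SimpleGraph (Fin n)) (L : Fin n → Fin n → Fin d)
    (σ : Fin n → Equiv.Perm (Fin d)) (ω : Sym2 (Fin n) → Bool) (t : ℕ) : Finset (Fin n) :=
  (expTraj G L σ ω t).2.2.1

/-- `Y_t`. -/
def expY {n d : ℕ} (G : SimpleGraph (Fin n)) (L : Fin n → Fin n → Fin d)
    (σ : Fin n → Equiv.Perm (Fin d)) (ω : Sym2 (Fin n) → Bool) (t : ℕ) : ℕ :=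
  (expTraj G L σ ω t).2.2.2.1

/-- `Z_t`. -/
def expZ {n d : ℕ} (G : SimpleGraph (Fin n)) (L : Fin n → Fin n → Fin d)
    (σ : Fin n → Equiv.Perm (Fin d)) (ω : Sym2 (Fin n) → Bool) (t : ℕ) : ℕ :=
  (expTraj G L σ ω t).2.2.2.2

/-- `X_t = Σ_{u ∈ S_t} (d - d_{H_t}(u) - d_{F_t}(u))`, the number of unexposed edges
between `S_t` and its complement. -/
def expX {n d : ℕ} (G : SimpleGraph (Fin n)) (L : Fin n → Fin n → Fin d)
    (σ : Fin n → Equiv.Perm (Fin d)) (ω : Sym2 (Fin n) → Bool) (t : ℕ) : ℕ :=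
  ∑ u ∈ expS G L σ ω t,
    (d - degS G (expS G L σ ω t) u - degF (expF G L σ ω t) u)

/-- The vertex `w_{t+1}` that the exploration process selects from the state `st`
(if any); this choice does not depend on the percolation configuration. -/
def expChosen {n d : ℕ} (G : SimpleGraph (Fin n)) (L : Fin n → Fin n → Fin d)
    (σ : Fin n → Equiv.Perm (Fin d)) (st : ExpState n) : Option (Fin n) :=
  let S := st.1
  let F := st.2.1
  let U := S.filter (fun u => degS G S u + degF F u < d)
  if hU : U.Nonempty then
    let v := U.min' hU
    let W := (Finset.univ \ S).filter (fun w => G.Adj v w ∧ s(v, w) ∉ F)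
    let W' := W.filter (fun w => ∀ w' ∈ W, σ v (L v w) ≤ σ v (L v w'))
    if hW : W'.Nonempty then some (W'.min' hW) else none
  else
    let C := Finset.univ \ S
    let C' := C.filter (fun w => ∀ w' ∈ C, degF F w ≤ degF F w')
    if hC : C'.Nonempty then some (C'.min' hC) else none

/-- The edges of `G` with both endpoints in `S` (the edge set of `H = G[S]`). -/
def innerEdges {n : ℕ} (G : SimpleGraph (Fin n)) (S : Finset (Fin n)) :
    Finset (Sym2 (Fin n)) :=
  G.edgeFinset.filter (fun e => ∀ x ∈ e, x ∈ S)

/-- The history `ℋ_t` of the exploration process: everything revealed up to time `t`,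
namely the states `(S_s, F_s, A_s, Y_s, Z_s)` together with the graphs `H_s = G[S_s]`
for all `s ≤ t` (constant junk value beyond time `t`). -/
def expHist {n d : ℕ} (G : SimpleGraph (Fin n)) (L : Fin n → Fin n → Fin d)
    (σ : Fin n → Equiv.Perm (Fin d)) (ω : Sym2 (Fin n) → Bool) (t : ℕ) :
    ℕ → ExpState n × Finset (Sym2 (Fin n)) :=
  fun s => if s ≤ t then
      (expTraj G L σ ω s, innerEdges G (expTraj G L σ ω s).1)
    else ((∅, ∅, ∅, 0, 0), ∅)

/-- `X_t` read off from a history: `Σ_{u ∈ S_t} (d - d_{H_t}(u) - d_{F_t}(u))`, where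
`d_{H_t}(u)` is computed from the revealed edge set of `H_t`. -/
def histX {n : ℕ} (d : ℕ) (hs : ExpState n × Finset (Sym2 (Fin n))) : ℕ :=
  ∑ u ∈ hs.1.1, (d - degF hs.2 u - degF hs.1.2.1 u)

/-- The expectation of `f` over a uniformly random input `(G_{n,d}, 𝔖_{n,d})` (the
labelling permutations `σ` being uniform and independent) together with an independent
percolation configuration in which each potential edge is retained independently with
probability `p`. -/
def expExpec (n d : ℕ) (p : ℝ)
    (f : SimpleGraph (Fin n) → (Fin n → Equiv.Perm (Fin d)) → (Sym2 (Fin n) → Bool) → ℝ) :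
    ℝ :=
  (((regularGraphs n d).card : ℝ) * (Fintype.card (Fin n → Equiv.Perm (Fin d)) : ℝ))⁻¹ *
    ∑ G ∈ regularGraphs n d, ∑ σ : Fin n → Equiv.Perm (Fin d), ∑ ω : Sym2 (Fin n) → Bool,
      percWeight p ω * f G σ ω

/-- The probability of an event for the exploration process on a uniformly random input
with independent percolation. -/
def expProb (n d : ℕ) (p : ℝ)
    (E : SimpleGraph (Fin n) → (Fin n → Equiv.Perm (Fin d)) → (Sym2 (Fin n) → Bool) → Prop) :
    ℝ :=
  expExpec n d p (fun G σ ω => if E G σ ω then 1 else 0)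

/-- A valid family of semi-edge labellings: for each graph `G` and each vertex `v`, the
labels of the semi-edges at `v` (i.e. the labels `L G v w` for neighbours `w` of `v`)
are pairwise distinct. -/
def GoodLabelling (n d : ℕ) (L : SimpleGraph (Fin n) → Fin n → Fin n → Fin d) : Prop :=
  ∀ G : SimpleGraph (Fin n), ∀ v : Fin n, Set.InjOn (L G v) (G.neighborSet v)


structure ExpInv {n : ℕ} (d : ℕ) (G : SimpleGraph (Fin n)) (st : ExpState n) (t : ℕ) : Prop where
  sub : st.2.2.1 ⊆ st.1
  edge : ∀ e ∈ st.2.1, ∃ v w, v ∈ st.1 ∧ w ∉ st.1 ∧ e = s(v, w) ∧ G.Adj v w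
  cardF : st.2.1.card ≤ t
  fin : st.2.2.1.card = 0 ∨ 5 * d * st.2.2.1.card < 6 * t + 5 * d
  pot : st.2.2.1.card = 0 ∨ ∃ r ∈ st.1,
    5 * d * st.2.2.1.card + 6 * (degS G st.1 r + degF st.2.1 r) ≤ 6 * (t + d)

lemma degS_insert {n : ℕ} (G : SimpleGraph (Fin n)) (S : Finset (Fin n)) (w r : Fin n) :
    degS G (insert w S) r ≤ degS G S r + 1 := by
  unfold degS
  refine le_trans (Finset.card_le_card (t := insert w (G.neighborFinset r ∩ S)) ?_)
    (Finset.card_insert_le _ _)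
  intro x hx
  simp only [Finset.mem_inter, Finset.mem_insert] at hx ⊢
  tauto

lemma degF_filter {n : ℕ} (F : Finset (Sym2 (Fin n))) (w r : Fin n) :
    degF (F.filter (fun e => w ∉ e)) r ≤ degF F r := by
  unfold degF
  exact Finset.card_le_card (Finset.filter_subset_filter _ (Finset.filter_subset _ _))

lemma degF_insert {n : ℕ} (F : Finset (Sym2 (Fin n))) (e : Sym2 (Fin n)) (r : Fin n) :
    degF (insert e F) r ≤ degF F r + 1 := by
  unfold degF
  refine le_trans (Finset.card_le_card (t := insert e (F.filter (fun e => r ∈ e))) ?_)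
    (Finset.card_insert_le _ _)
  intro x hx
  simp only [Finset.mem_filter, Finset.mem_insert] at hx ⊢
  tauto

lemma degF_filter_self {n : ℕ} (F : Finset (Sym2 (Fin n))) (w : Fin n) :
    degF (F.filter (fun e => w ∉ e)) w = 0 := by
  unfold degF
  rw [Finset.card_eq_zero, Finset.filter_filter, Finset.filter_eq_empty_iff]
  tauto

lemma degS_insert_self {n : ℕ} (G : SimpleGraph (Fin n)) (S : Finset (Fin n)) (w : Fin n) :
    degS G (insert w S) w = degS G S w := by
  unfold degS
  congr 1
  ext x
  simp only [Finset.mem_inter, Finset.mem_insert, SimpleGraph.mem_neighborFinset]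
  constructor
  · rintro ⟨h, rfl | h'⟩
    · exact absurd h (G.loopless.irrefl _)
    · exact ⟨h, h'⟩
  · rintro ⟨h, h'⟩
    exact ⟨h, Or.inr h'⟩

lemma degS_le_degF {n d : ℕ} (G : SimpleGraph (Fin n)) (hG : ∀ v, G.degree v = d)
    (S : Finset (Fin n)) (F : Finset (Sym2 (Fin n)))
    (hF : ∀ e ∈ F, ∃ v w, v ∈ S ∧ w ∉ S ∧ e = s(v, w) ∧ G.Adj v w)
    (hU : ∀ u ∈ S, d ≤ degS G S u + degF F u) (r : Fin n) (hr : r ∉ S) :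
    degS G S r ≤ degF F r := by
  have key : ∀ u ∈ S, G.Adj u r → s(u, r) ∈ F := by
    intro u hu hur
    by_contra hn
    have h1 : degF F u ≤ ((G.neighborFinset u \ S).erase r).card := by
      unfold degF
      refine le_trans (Finset.card_le_card
        (t := ((G.neighborFinset u \ S).erase r).image (fun w => s(u, w))) ?_)
        Finset.card_image_le
      intro e he
      simp only [Finset.mem_filter] at he
      obtain ⟨heF, hue⟩ := he
      obtain ⟨a, b, ha, hb, rfl, hab⟩ := hF e heF
      have hua : u = a := by
        rcases Sym2.mem_iff.1 hue with h | h
        · exact h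
        · subst h; exact absurd hu hb
      subst hua
      refine Finset.mem_image.2 ⟨b, ?_, rfl⟩
      simp only [Finset.mem_erase, Finset.mem_sdiff, SimpleGraph.mem_neighborFinset]
      refine ⟨?_, hab, hb⟩
      rintro rfl
      exact hn heF
    have h2 : r ∈ G.neighborFinset u \ S := by
      simp [hur, hr]
    have h3 := Finset.card_erase_lt_of_mem h2
    have h4 := Finset.card_inter_add_card_sdiff (G.neighborFinset u) S
    have h5 := hU u hu
    have h6 : (G.neighborFinset u).card = d := by
      rw [SimpleGraph.card_neighborFinset_eq_degree]; exact hG u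
    unfold degS at h5
    omega
  unfold degS degF
  refine Finset.card_le_card_of_injOn (fun u => s(u, r)) ?_ ?_
  · intro u hu
    simp only [Finset.coe_inter, Set.mem_inter_iff, Finset.mem_coe,
      SimpleGraph.mem_neighborFinset] at hu
    simp only [Finset.coe_filter, Set.mem_ofPred_eq]
    exact ⟨key u hu.2 hu.1.symm, Sym2.mem_mk_right _ _⟩
  · intro a _ b _ hab
    exact Sym2.congr_left.1 hab

lemma sum_degF_le {n : ℕ} (G : SimpleGraph (Fin n))
    (S : Finset (Fin n)) (F : Finset (Sym2 (Fin n)))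
    (hF : ∀ e ∈ F, ∃ v w, v ∈ S ∧ w ∉ S ∧ e = s(v, w) ∧ G.Adj v w) :
    ∑ w ∈ Finset.univ \ S, degF F w ≤ F.card := by
  unfold degF
  simp only [Finset.card_filter]
  rw [Finset.sum_comm, Finset.card_eq_sum_ones]
  refine Finset.sum_le_sum fun e he => ?_
  rw [← Finset.card_filter, Finset.card_le_one]
  obtain ⟨a, b, ha, hb, rfl, hab⟩ := hF e he
  intro x hx y hy
  simp only [Finset.mem_filter, Finset.mem_sdiff, Finset.mem_univ, true_and,
    Sym2.mem_iff] at hx hy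
  have h1 : x = b := by
    rcases hx with ⟨h, h' | h'⟩
    · subst h'; exact absurd ha h
    · exact h'
  have h2 : y = b := by
    rcases hy with ⟨h, h' | h'⟩
    · subst h'; exact absurd ha h
    · exact h'
  rw [h1, h2]

lemma inv_step {n d : ℕ} (G : SimpleGraph (Fin n)) (hG : ∀ v, G.degree v = d)
    (L : Fin n → Fin n → Fin d)
    (σ : Fin n → Equiv.Perm (Fin d)) (ω : Sym2 (Fin n) → Bool)
    (st : ExpState n) (t : ℕ) (h : ExpInv d G st t)
    (hmin : ∀ f : ℕ, f * (Finset.univ \ st.1).card ≤ st.2.1.card →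
      (Finset.univ \ st.1).Nonempty → 6 * f ≤ d) :
    ExpInv d G (expStep G L σ ω st) (t + 1) := by
  obtain ⟨S, F, A, y, z⟩ := st
  obtain ⟨hsub, hedge, hcard, hfin, hpot⟩ := h
  simp only at hsub hedge hcard hfin hpot hmin
  unfold expStep
  simp only
  split_ifs with hU hW hw hC
  · -- percolates
    set w := Finset.min' _ hW with hwdef
    have hwm := Finset.min'_mem _ hW
    rw [← hwdef] at hwm
    simp only [Finset.mem_filter, Finset.mem_sdiff, Finset.mem_univ, true_and] at hwm
    refine ⟨?_, ?_, ?_, ?_, ?_⟩ <;> simp only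
    · exact hsub.trans (Finset.subset_insert _ _)
    · intro e he
      obtain ⟨heF, hwe⟩ := Finset.mem_filter.1 he
      obtain ⟨a, b, ha, hb, rfl, hab⟩ := hedge e heF
      refine ⟨a, b, Finset.mem_insert_of_mem ha, ?_, rfl, hab⟩
      intro hb'
      rcases Finset.mem_insert.1 hb' with h | h
      · exact hwe (h ▸ Sym2.mem_mk_right _ _)
      · exact hb h
    · exact (Finset.card_filter_le _ _).trans (by omega)
    · omega
    · rcases hpot with h | ⟨r, hr, h⟩
      · exact Or.inl h
      · refine Or.inr ⟨r, Finset.mem_insert_of_mem hr, ?_⟩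
        have h1 := degS_insert G S w r
        have h2 := degF_filter F w r
        omega
  · -- fails
    set w := Finset.min' _ hW with hwdef
    have hwm := Finset.min'_mem _ hW
    rw [← hwdef] at hwm
    have hvm := Finset.min'_mem _ hU
    simp only [Finset.mem_filter, Finset.mem_sdiff, Finset.mem_univ, true_and] at hwm hvm
    refine ⟨hsub, ?_, ?_, ?_, ?_⟩ <;> simp only
    · intro e he
      rcases Finset.mem_insert.1 he with rfl | he
      · exact ⟨_, w, hvm.1, hwm.1.1, rfl, hwm.1.2.1⟩
      · exact hedge e he
    · exact (Finset.card_insert_le _ _).trans (by omega)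
    · omega
    · rcases hpot with h | ⟨r, hr, h⟩
      · exact Or.inl h
      · refine Or.inr ⟨r, hr, ?_⟩
        have h2 := degF_insert F s(Finset.min' _ hU, w) r
        omega
  · refine ⟨hsub, hedge, ?_, ?_, ?_⟩ <;> simp only
    · omega
    · omega
    · rcases hpot with h | ⟨r, hr, h⟩
      · exact Or.inl h
      · exact Or.inr ⟨r, hr, by omega⟩
  · set w := Finset.min' _ hC with hwdef
    have hwm := Finset.min'_mem _ hC
    rw [← hwdef] at hwm
    simp only [Finset.mem_filter, Finset.mem_sdiff, Finset.mem_univ, true_and] at hwm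
    obtain ⟨hwS, hwmin⟩ := hwm
    have hUall : ∀ u ∈ S, d ≤ degS G S u + degF F u := by
      intro u hu
      by_contra hlt
      exact hU ⟨u, Finset.mem_filter.2 ⟨hu, by omega⟩⟩
    have hf : 6 * degF F w ≤ d := by
      apply hmin
      · refine le_trans ?_ (sum_degF_le G S F hedge)
        rw [mul_comm, ← smul_eq_mul]
        refine Finset.card_nsmul_le_sum _ _ _ ?_
        intro x hx
        exact hwmin x (by simpa using hx)
      · exact ⟨w, by simpa using hwS⟩
    have hSF := degS_le_degF G hG S F hedge hUall w hwS
    have hA : (insert w A).card = A.card + 1 :=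
      Finset.card_insert_of_notMem (fun h => hwS (hsub h))
    have hold : 5 * d * A.card ≤ 6 * t := by
      rcases hpot with h | ⟨r, hr, h⟩
      · rw [h]; omega
      · have := hUall r hr
        omega
    refine ⟨?_, ?_, ?_, ?_, ?_⟩ <;> simp only
    · exact Finset.insert_subset_insert _ hsub
    · intro e he
      obtain ⟨heF, hwe⟩ := Finset.mem_filter.1 he
      obtain ⟨a, b, ha, hb, rfl, hab⟩ := hedge e heF
      refine ⟨a, b, Finset.mem_insert_of_mem ha, ?_, rfl, hab⟩
      intro hb'
      rcases Finset.mem_insert.1 hb' with h | h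
      · exact hwe (h ▸ Sym2.mem_mk_right _ _)
      · exact hb h
    · exact (Finset.card_filter_le _ _).trans (by omega)
    · right
      rw [hA, mul_add]
      omega
    · right
      refine ⟨w, Finset.mem_insert_self _ _, ?_⟩
      rw [hA, mul_add, degS_insert_self, degF_filter_self]
      omega
  · refine ⟨hsub, hedge, ?_, ?_, ?_⟩ <;> simp only
    · omega
    · omega
    · rcases hpot with h | ⟨r, hr, h⟩
      · exact Or.inl h
      · exact Or.inr ⟨r, hr, by omega⟩

/-- **Claim in Lemma 4.3.** For `3 ≤ d ≤ n-1`, `n` sufficiently large, any realisation of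
the exploration process (i.e. any `d`-regular input and percolation outcome) and any
`t ≤ 5 d n^{2/3}`: if `c_s = |S_s ∖ A_s| ≤ 8 n^{2/3}` for all `s ≤ t`, then the number
`a_t = |A_t|` of vertices that started a new component satisfies
`a_t ≤ ⌈t/(5d/6)⌉`. -/
theorem statement_18 :
    ∃ N : ℕ, ∀ n : ℕ, N ≤ n → ∀ d : ℕ, 3 ≤ d → d ≤ n - 1 →
    ∀ G : SimpleGraph (Fin n), (∀ v, G.degree v = d) →
    ∀ L : Fin n → Fin n → Fin d, (∀ v : Fin n, Set.InjOn (L v) (G.neighborSet v)) →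
    ∀ σ : Fin n → Equiv.Perm (Fin d), ∀ ω : Sym2 (Fin n) → Bool,
    ∀ t : ℕ, (t : ℝ) ≤ 5 * (d : ℝ) * (n : ℝ) ^ ((2 : ℝ) / 3) →
    (∀ s ≤ t, ((expS G L σ ω s \ expA G L σ ω s).card : ℝ) ≤ 8 * (n : ℝ) ^ ((2 : ℝ) / 3)) →
    ((expA G L σ ω t).card : ℝ) ≤ ((Int.ceil ((t : ℝ) / (5 * (d : ℝ) / 6)) : ℤ) : ℝ) := by
  refine ⟨50 ^ 3, ?_⟩
  intro n hn d hd _ G hG L _ σ ω t ht hc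
  obtain ⟨x, hx, hx2, hx3⟩ : ∃ x : ℝ, 50 ≤ x ∧ (n : ℝ) ^ ((2 : ℝ) / 3) = x ^ 2 ∧
      (n : ℝ) = x ^ 3 := by
    have hn0 : (0 : ℝ) ≤ n := Nat.cast_nonneg n
    refine ⟨(n : ℝ) ^ ((1 : ℝ) / 3), ?_, ?_, ?_⟩
    · have h1 : ((50 : ℝ) ^ 3) ^ ((1 : ℝ) / 3) = 50 := by
        rw [← Real.rpow_natCast, ← Real.rpow_mul (by norm_num)]
        norm_num
      rw [← h1]
      apply Real.rpow_le_rpow (by norm_num) _ (by norm_num)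
      exact_mod_cast hn
    · rw [← Real.rpow_natCast, ← Real.rpow_mul hn0]
      norm_num
    · rw [← Real.rpow_natCast, ← Real.rpow_mul hn0]
      norm_num
  rw [hx2] at ht hc
  have hdpos : (0 : ℝ) < d := by exact_mod_cast (by omega : 0 < d)
  have main : ∀ s ≤ t, ExpInv d G (expTraj G L σ ω s) s := by
    intro s
    induction s with
    | zero =>
      intro _
      refine ⟨?_, ?_, ?_, ?_, ?_⟩ <;> simp [expTraj]
    | succ s ih =>
      intro hs
      have hI := ih (by omega)
      refine inv_step G hG L σ ω _ s hI ?_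
      intro f hf _
      have hcs := hc s (by omega)
      unfold expS expA at hcs
      generalize expTraj G L σ ω s = st at hI hf hcs
      obtain ⟨S, F, A, y, z⟩ := st
      obtain ⟨hsub, hedge, hcard, hfin, hpot⟩ := hI
      simp only at hsub hedge hcard hfin hpot hf hcs
      have hst : (s : ℝ) ≤ 5 * d * x ^ 2 :=
        le_trans (by exact_mod_cast (by omega : s ≤ t)) ht
      have ha : (A.card : ℝ) ≤ 6 * x ^ 2 + 1 := by
        rcases hfin with h | h
        · rw [h]; push_cast; positivity
        · have h' : 5 * (d : ℝ) * A.card < 6 * s + 5 * d := by exact_mod_cast h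
          have : (d : ℝ) * A.card ≤ d * (6 * x ^ 2 + 1) := by nlinarith
          exact le_of_mul_le_mul_left this hdpos
      have hS : ((S \ A).card : ℝ) + A.card = S.card := by
        exact_mod_cast Finset.card_sdiff_add_card_eq_card hsub
      have hCc : ((Finset.univ \ S).card : ℝ) + S.card = x ^ 3 := by
        rw [← hx3]
        have := Finset.card_sdiff_add_card_eq_card (Finset.subset_univ S)
        rw [Finset.card_univ, Fintype.card_fin] at this
        exact_mod_cast this
      have hbig : 35 * x ^ 2 ≤ ((Finset.univ \ S).card : ℝ) := by nlinarith
      have hf' : (f : ℝ) * (Finset.univ \ S).card ≤ 5 * d * x ^ 2 := by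
        refine le_trans ?_ hst
        exact_mod_cast hf.trans hcard
      have h7 : (f : ℝ) * (35 * x ^ 2) ≤ 5 * d * x ^ 2 :=
        le_trans (mul_le_mul_of_nonneg_left hbig (Nat.cast_nonneg f)) hf'
      have h8 : (7 * f : ℝ) * (5 * x ^ 2) ≤ d * (5 * x ^ 2) := by linarith
      have h9 : (7 * f : ℝ) ≤ d := le_of_mul_le_mul_right h8 (by positivity)
      have h10 : 7 * f ≤ d := by exact_mod_cast h9
      omega
  have hI := (main t le_rfl).fin
  change (expA G L σ ω t).card = 0 ∨ 5 * d * (expA G L σ ω t).card < 6 * t + 5 * d at hI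
  rcases hI with h | h
  · rw [h]
    push_cast
    exact_mod_cast Int.ceil_nonneg (by positivity)
  · have h' : 5 * (d : ℝ) * (expA G L σ ω t).card < 6 * t + 5 * d := by exact_mod_cast h
    have h1 : ((expA G L σ ω t).card : ℝ) - 1 < (t : ℝ) / (5 * (d : ℝ) / 6) := by
      rw [lt_div_iff₀ (by positivity)]
      nlinarith
    have h2 : (((expA G L σ ω t).card : ℤ) - 1 : ℤ) < Int.ceil ((t : ℝ) / (5 * (d : ℝ) / 6)) := by
      rw [Int.lt_ceil]
      push_cast
      exact h1
    have h3 : ((expA G L σ ω t).card : ℤ) ≤ Int.ceil ((t : ℝ) / (5 * (d : ℝ) / 6)) := by omega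
    exact_mod_cast h3
end
end
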